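/- arXiv:1102.5165 — 3 statements merged into one kernel-verified Lean document; each statement's English description precedes it below -/
import Mathlib

section
/- For every field F and every polynomial P ∈ F[u,v], both of the polynomials P(v,u)P(u,w)(v−w) + P(u,w)P(v,w)(u−v) − P(u,v)P(v,w)(u−w) and −P(u,v)P(u,w)(v−w) − P(u,w)P(w,v)(u−v) + P(u,v)P(v,w)(u−w) in F[u,v,w] are divisible by (u−v)(u−w)(v−w); equivalently, the rational functions P'(u,v,w) and P''(u,v,w) are polynomials in F[u,v,w]. -/
/-!
STATEMENT 14: For every field `F` and every polynomial `P ∈ F[u,v]`, both of the polynomials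
`P(v,u)P(u,w)(v−w) + P(u,w)P(v,w)(u−v) − P(u,v)P(v,w)(u−w)` and
`−P(u,v)P(u,w)(v−w) − P(u,w)P(w,v)(u−v) + P(u,v)P(v,w)(u−w)` in `F[u,v,w]` are divisible by
`(u−v)(u−w)(v−w)`; equivalently, the rational functions `P'(u,v,w)` and `P''(u,v,w)` are
polynomials.

We realize `F[u,v]` as `MvPolynomial (Fin 2) F` (with `u = X 0`, `v = X 1`) and `F[u,v,w]` as
`MvPolynomial (Fin 3) F` (with `u = X 0`, `v = X 1`, `w = X 2`).  For a polynomial `P` in two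
variables, the evaluation `P(x,y)` with `x, y` among `u, v, w` is `rename ![ix, iy] P`.
-/

open MvPolynomial

/-!
Setting two of the variables equal makes one of the three terms of either numerator vanish and the
other two cancel, so each numerator is divisible by every difference of two variables. Such a
difference is a non-zero-divisor that stays one after setting another pair of variables equal; hence
the three divisors can be split off one after the other, over any commutative ring.
-/

section Divisibility

variable {σ R : Type*} [CommRing R]

theorem isRegular_X_sub_X {i j : σ} (hij : i ≠ j) :
    IsRegular (X i - X j : MvPolynomial σ R) := by
  classical
  -- The automorphism `X i ↦ X i + X j` sends `X i - X j` to the regular element `X i`.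
  let shift : MvPolynomial σ R →ₐ[R] MvPolynomial σ R := aeval (Function.update X i (X i + X j))
  let unshift : MvPolynomial σ R →ₐ[R] MvPolynomial σ R := aeval (Function.update X i (X i - X j))
  have unshift_comp_shift : unshift.comp shift = AlgHom.id R _ := by
    ext1 k
    rcases eq_or_ne k i with rfl | hk
    · simp [shift, unshift, hij.symm]
    · simp [shift, unshift, hk]
  have shift_injective : Function.Injective shift :=
    Function.LeftInverse.injective (g := unshift) (DFunLike.congr_fun unshift_comp_shift)
  have shift_X_sub_X : shift (X i - X j) = X i := by simp [shift, hij.symm]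
  rw [← isLeftRegular_iff_isRegular]
  intro a b hab
  apply shift_injective
  apply (isRegular_X (n := i)).left
  simpa only [map_mul, shift_X_sub_X] using congrArg shift hab

variable [DecidableEq σ]

theorem X_sub_X_dvd_sub_rename_update (i j : σ) (p : MvPolynomial σ R) :
    X i - X j ∣ p - rename (Function.update id i j) p := by
  let π := Ideal.Quotient.mkₐ R (Ideal.span {(X i - X j : MvPolynomial σ R)})
  have hπ : π (X i) = π (X j) :=
    Ideal.Quotient.eq.mpr (Ideal.mem_span_singleton_self _)
  have hcomp : π.comp (rename (Function.update id i j)) = π := by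
    ext k
    rcases eq_or_ne k i with rfl | hk
    · simp [hπ]
    · simp [hk]
  rw [← Ideal.mem_span_singleton]
  exact Ideal.Quotient.eq.mp (DFunLike.congr_fun hcomp p).symm

theorem update_id_ne_update_id [Preorder σ] {i j k l : σ} (hij : i < j) (hkl : k < l)
    (h : (k, l) ≠ (i, j)) : Function.update id i j k ≠ Function.update id i j l := by
  rcases eq_or_ne k i with rfl | hk
  · have hjl : j ≠ l := fun hjl => h (by rw [hjl])
    simpa [hkl.ne'] using hjl
  · rcases eq_or_ne l i with rfl | hl
    · simpa [hk] using (hkl.trans hij).ne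
    · simpa [hk, hl] using hkl.ne

theorem prod_X_sub_X_dvd_of_rename_update_eq_zero [Preorder σ] {s : Finset (σ × σ)}
    (hs : ∀ e ∈ s, e.1 < e.2) {p : MvPolynomial σ R}
    (hp : ∀ e ∈ s, rename (Function.update id e.1 e.2) p = 0) :
    ∏ e ∈ s, (X e.1 - X e.2) ∣ p := by
  induction s using Finset.induction_on with
  | empty => simp
  | insert e s he ih =>
    rw [Finset.forall_mem_insert] at hs hp
    obtain ⟨q, rfl⟩ := ih hs.2 hp.2
    have hreg : IsRegular (rename (Function.update id e.1 e.2)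
        (∏ d ∈ s, (X d.1 - X d.2) : MvPolynomial σ R)) := by
      simp only [map_prod, map_sub, rename_X]
      exact IsRegular.prod fun d hd =>
        isRegular_X_sub_X (update_id_ne_update_id hs.1 (hs.2 d hd) (ne_of_mem_of_not_mem hd he))
    have hq : rename (Function.update id e.1 e.2) q = 0 := by
      simpa only [map_mul, hreg.left.mul_left_eq_zero_iff] using hp.1
    rw [Finset.prod_insert he, mul_comm]
    apply mul_dvd_mul_left
    simpa only [hq, sub_zero] using X_sub_X_dvd_sub_rename_update e.1 e.2 q

end Divisibility

section Numerators

variable {σ τ R : Type*} [CommRing R] (P : MvPolynomial (Fin 2) R)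

/-- The numerator of `P'(u,v,w)` over the common denominator `(u−v)(u−w)(v−w)`, for variables
indexed by `u`, `v`, `w`, which may coincide. -/
noncomputable def firstNumerator (u v w : σ) : MvPolynomial σ R :=
  rename ![v, u] P * rename ![u, w] P * (X v - X w)
    + rename ![u, w] P * rename ![v, w] P * (X u - X v)
    - rename ![u, v] P * rename ![v, w] P * (X u - X w)

/-- The numerator of `P''(u,v,w)` over the common denominator `(u−v)(u−w)(v−w)`, for variables
indexed by `u`, `v`, `w`, which may coincide. -/
noncomputable def secondNumerator (u v w : σ) : MvPolynomial σ R :=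
  -(rename ![u, v] P * rename ![u, w] P * (X v - X w))
    - rename ![u, w] P * rename ![w, v] P * (X u - X v)
    + rename ![u, v] P * rename ![v, w] P * (X u - X w)

theorem rename_rename_pair (f : σ → τ) (a b : σ) :
    rename f (rename ![a, b] P) = rename ![f a, f b] P := by
  have hcomp : f ∘ ![a, b] = ![f a, f b] := by
    ext k
    fin_cases k <;> rfl
  rw [rename_rename, hcomp]

theorem rename_firstNumerator (f : σ → τ) (u v w : σ) :
    rename f (firstNumerator P u v w) = firstNumerator P (f u) (f v) (f w) := by
  simp only [firstNumerator, map_add, map_sub, map_mul, rename_X, rename_rename_pair]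

theorem rename_secondNumerator (f : σ → τ) (u v w : σ) :
    rename f (secondNumerator P u v w) = secondNumerator P (f u) (f v) (f w) := by
  simp only [secondNumerator, map_add, map_sub, map_neg, map_mul, rename_X, rename_rename_pair]

theorem firstNumerator_eq_zero {u v w : σ} (h : u = v ∨ u = w ∨ v = w) :
    firstNumerator P u v w = 0 := by
  rcases h with rfl | rfl | rfl <;> rw [firstNumerator] <;> ring

theorem secondNumerator_eq_zero {u v w : σ} (h : u = v ∨ u = w ∨ v = w) :
    secondNumerator P u v w = 0 := by
  rcases h with rfl | rfl | rfl <;> rw [secondNumerator] <;> ring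

end Numerators

theorem vandermonde_dvd_of_rename_eq_zero {R : Type*} [CommRing R] {p : MvPolynomial (Fin 3) R}
    (hp : ∀ f : Fin 3 → Fin 3, f 0 = f 1 ∨ f 0 = f 2 ∨ f 1 = f 2 → rename f p = 0) :
    (X 0 - X 1) * (X 0 - X 2) * (X 1 - X 2) ∣ p := by
  have hdvd : ∏ e ∈ {((0 : Fin 3), (1 : Fin 3)), (0, 2), (1, 2)}, (X e.1 - X e.2) ∣ p :=
    prod_X_sub_X_dvd_of_rename_update_eq_zero (by decide) fun e he => hp _ (by decide +revert)
  simpa [mul_assoc] using hdvd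

theorem stmt_14_general {R : Type*} [CommRing R] (P : MvPolynomial (Fin 2) R) :
    ((X 0 - X 1) * (X 0 - X 2) * (X 1 - X 2) ∣
      (rename (![1, 0] : Fin 2 → Fin 3) P * rename (![0, 2] : Fin 2 → Fin 3) P * (X 1 - X 2)
        + rename (![0, 2] : Fin 2 → Fin 3) P * rename (![1, 2] : Fin 2 → Fin 3) P * (X 0 - X 1)
        - rename (![0, 1] : Fin 2 → Fin 3) P * rename (![1, 2] : Fin 2 → Fin 3) P * (X 0 - X 2)))
    ∧ ((X 0 - X 1) * (X 0 - X 2) * (X 1 - X 2) ∣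
      (- (rename (![0, 1] : Fin 2 → Fin 3) P * rename (![0, 2] : Fin 2 → Fin 3) P * (X 1 - X 2))
        - rename (![0, 2] : Fin 2 → Fin 3) P * rename (![2, 1] : Fin 2 → Fin 3) P * (X 0 - X 1)
        + rename (![0, 1] : Fin 2 → Fin 3) P * rename (![1, 2] : Fin 2 → Fin 3) P *
            (X 0 - X 2))) := by
  constructor
  · refine vandermonde_dvd_of_rename_eq_zero fun f hf => ?_
    exact (rename_firstNumerator P f 0 1 2).trans (firstNumerator_eq_zero P hf)
  · refine vandermonde_dvd_of_rename_eq_zero fun f hf => ?_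
    exact (rename_secondNumerator P f 0 1 2).trans (secondNumerator_eq_zero P hf)

theorem stmt_14 (F : Type) [Field F] (P : MvPolynomial (Fin 2) F) :
    ((X 0 - X 1) * (X 0 - X 2) * (X 1 - X 2) ∣
      (rename (![1, 0] : Fin 2 → Fin 3) P * rename (![0, 2] : Fin 2 → Fin 3) P * (X 1 - X 2)
        + rename (![0, 2] : Fin 2 → Fin 3) P * rename (![1, 2] : Fin 2 → Fin 3) P * (X 0 - X 1)
        - rename (![0, 1] : Fin 2 → Fin 3) P * rename (![1, 2] : Fin 2 → Fin 3) P * (X 0 - X 2)))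
    ∧ ((X 0 - X 1) * (X 0 - X 2) * (X 1 - X 2) ∣
      (- (rename (![0, 1] : Fin 2 → Fin 3) P * rename (![0, 2] : Fin 2 → Fin 3) P * (X 1 - X 2))
        - rename (![0, 2] : Fin 2 → Fin 3) P * rename (![2, 1] : Fin 2 → Fin 3) P * (X 0 - X 1)
        + rename (![0, 1] : Fin 2 → Fin 3) P * rename (![1, 2] : Fin 2 → Fin 3) P * (X 0 - X 2))) :=
  stmt_14_general P
end

section
/- For every polynomial P ∈ F[u,v] and every 1 ≤ t ≤ m−2, the identity τ_{t+1}(τ_t(τ_{t+1}(f))) − τ_t(τ_{t+1}(τ_t(f))) = P'(x_t,x_{t+1},x_{t+2})·τ_t(f) + P''(x_t,x_{t+1},x_{t+2})·τ_{t+1}(f) holds for all f ∈ F[x_1,…,x_m], where P'(x_t,x_{t+1},x_{t+2}) and P''(x_t,x_{t+1},x_{t+2}) denote the evaluations at (x_t,x_{t+1},x_{t+2}) of the polynomials P' and P'' (these are polynomials because their numerators are divisible by (u−v)(u−w)(v−w)). -/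
/-!
Common setup: Let `F` be a field and `m` a positive integer.  The symmetric group `S_m` acts on
`F[x_1,…,x_m] = MvPolynomial (Fin m) F` by permuting the variables; `r_t` is the action of the
transposition `(t, t+1)`, and the divided difference operator `∂_t` is characterized by
`∂_t f * (x_t − x_{t+1}) = r_t f − f` (this determines `∂_t` uniquely, since `MvPolynomial` over a
field is an integral domain and `x_t − x_{t+1} ≠ 0`).  Positions are indexed by `t : Fin (m-1)`,
with `castL t`, `castR t : Fin m` the `t`-th and `(t+1)`-st positions.
-/

open MvPolynomial

namespace DD

/-- The `t`-th position. -/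
def castL {m : ℕ} (t : Fin (m - 1)) : Fin m := ⟨t.1, by have := t.isLt; omega⟩

/-- The `(t+1)`-st position. -/
def castR {m : ℕ} (t : Fin (m - 1)) : Fin m := ⟨t.1 + 1, by have := t.isLt; omega⟩

/-- The transposition `r_t = (t, t+1)` as a permutation of `Fin m`. -/
def swapAt {m : ℕ} (t : Fin (m - 1)) : Equiv.Perm (Fin m) := Equiv.swap (castL t) (castR t)

/-- `IsDividedDiff dd` says that `dd t` is the divided difference operator
`∂_t f = (r_t f − f)/(x_t − x_{t+1})`, expressed by the defining identity
`∂_t f * (x_t − x_{t+1}) = r_t f − f`. -/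
def IsDividedDiff {F : Type} [Field F] {m : ℕ}
    (dd : (t : Fin (m - 1)) → MvPolynomial (Fin m) F → MvPolynomial (Fin m) F) : Prop :=
  ∀ (t : Fin (m - 1)) (f : MvPolynomial (Fin m) F),
    dd t f * (X (castL t) - X (castR t)) = rename (swapAt t) f - f

/-- `P(x_t, x_{t+1})` as an element of `F[x_1,…,x_m]`, for a two-variable polynomial `P`. -/
noncomputable def Pat {F : Type} [Field F] {m : ℕ} (P : MvPolynomial (Fin 2) F)
    (t : Fin (m - 1)) : MvPolynomial (Fin m) F :=
  aeval ![X (castL t), X (castR t)] P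

/-- The operator `τ_t f = P(x_t,x_{t+1}) · ∂_t f`. -/
noncomputable def tauOp {F : Type} [Field F] {m : ℕ} (P : MvPolynomial (Fin 2) F)
    (dd : (t : Fin (m - 1)) → MvPolynomial (Fin m) F → MvPolynomial (Fin m) F)
    (t : Fin (m - 1)) (f : MvPolynomial (Fin m) F) : MvPolynomial (Fin m) F :=
  Pat P t * dd t f

end DD

/-!
Over the total ring of fractions `K` of the polynomial ring, put
`A i j = P(x_i, x_j) / (x_i - x_j)`. Then `τ_t` becomes the operator `A t (t+1) • (s_t - 1)` of the
skew group ring of the symmetric group over `K`, and `s • A i j = A (s i) (s j)` for every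
permutation `s`. Expanding both triple products with this rule, the terms in `s_t s_{t+1} s_t`,
`s_t s_{t+1}` and `s_{t+1} s_t` cancel, and what is left is a combination of `τ_t` and `τ_{t+1}`.
-/

namespace DD

open Equiv

section SkewGroupRing

variable {K : Type*} [CommRing K]

/-- The action on `K` of the element `A (s - 1)` of the skew group ring of `RingAut K` over `K`. -/
def skewDiff (A : K) (s : K ≃+* K) (f : K) : K := A * (s f - f)

theorem skewDiff_braid {s₁ s₂ : K ≃+* K} (hs₁ : s₁ * s₁ = 1) (hs₂ : s₂ * s₂ = 1)
    (hbraid : s₁ * s₂ * s₁ = s₂ * s₁ * s₂) {A B C : K} (hA : s₂ A = C) (hB : s₁ B = C) (f : K) :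
    skewDiff B s₂ (skewDiff A s₁ (skewDiff B s₂ f))
        - skewDiff A s₁ (skewDiff B s₂ (skewDiff A s₁ f)) =
      (C * B - s₁ A * C - A * B) * skewDiff A s₁ f
        + (A * B + C * s₂ B - A * C) * skewDiff B s₂ f := by
  have invol₁ (x : K) : s₁ (s₁ x) = x := RingEquiv.congr_fun hs₁ x
  have invol₂ (x : K) : s₂ (s₂ x) = x := RingEquiv.congr_fun hs₂ x
  have braid : s₁ (s₂ (s₁ f)) = s₂ (s₁ (s₂ f)) := RingEquiv.congr_fun hbraid f
  have hC₁ : s₁ C = B := by rw [← hB, invol₁]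
  have hC₂ : s₂ C = A := by rw [← hA, invol₂]
  simp only [skewDiff, map_mul, map_sub, invol₁, invol₂, hA, hB, hC₁, hC₂, braid]
  ring

end SkewGroupRing

theorem swap_braid {σ : Type*} [DecidableEq σ] {i j k : σ} (hij : i ≠ j) (hik : i ≠ k)
    (hjk : j ≠ k) :
    swap i j * swap j k * swap i j = swap j k * swap i j * swap j k := by
  rw [swap_mul_swap_mul_swap hij hik, swap_comm i j, swap_comm j k,
    swap_mul_swap_mul_swap hjk.symm hik.symm, swap_comm]

section PairEvaluation

variable {R σ : Type*} [CommSemiring R]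

theorem aeval_rename_pair {A : Type*} [CommSemiring A] [Algebra R A] (x : σ → A) (p q : σ)
    (P : MvPolynomial (Fin 2) R) :
    aeval x (rename ![p, q] P) = aeval ![x p, x q] P := by
  rw [aeval_rename]
  congr 2
  funext l
  fin_cases l <;> rfl

theorem map_aeval_pair {A B : Type*} [CommSemiring A] [CommSemiring B] [Algebra R A] [Algebra R B]
    (φ : A →ₐ[R] B) (x y : A) (P : MvPolynomial (Fin 2) R) :
    φ (aeval ![x, y] P) = aeval ![φ x, φ y] P := by
  rw [← AlgHom.comp_apply, comp_aeval]
  congr 2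
  funext l
  fin_cases l <;> rfl

end PairEvaluation

section TotalFractions

variable {R σ : Type*} [CommRing R]

theorem isRegular_X_sub_X {i j : σ} (hij : i ≠ j) :
    IsRegular (X i - X j : MvPolynomial σ R) := by
  classical
  -- The shear `x_i ↦ x_i + x_j` is injective and carries `x_i - x_j` to the regular element `x_i`.
  let shear : MvPolynomial σ R →ₐ[R] MvPolynomial σ R := aeval (Function.update X i (X i + X j))
  let unshear : MvPolynomial σ R →ₐ[R] MvPolynomial σ R := aeval (Function.update X i (X i - X j))
  have unshear_shear (p : MvPolynomial σ R) : unshear (shear p) = p := by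
    suffices unshear.comp shear = AlgHom.id R _ from AlgHom.congr_fun this p
    ext l : 1
    by_cases hl : l = i
    · subst hl
      simp [shear, unshear, Function.update_of_ne hij.symm]
    · simp [shear, unshear, Function.update_of_ne hl]
  have shear_sub : shear (X i - X j) = X i := by
    simp [shear, Function.update_of_ne hij.symm]
  refine isRegular_iff_mem_nonZeroDivisors.mpr (mem_nonZeroDivisors_iff_right.mpr fun p hp => ?_)
  have shear_mul : shear p * X i = 0 := by rw [← shear_sub, ← map_mul, hp, map_zero]
  rw [← unshear_shear p, isRegular_X.right.mul_right_eq_zero_iff.mp shear_mul, map_zero]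

/-- The canonical map from the polynomial ring to its total ring of fractions. -/
noncomputable abbrev toFrac : MvPolynomial σ R →+* FractionRing (MvPolynomial σ R) :=
  algebraMap _ _

theorem isUnit_toFrac_X_sub_X {i j : σ} (hij : i ≠ j) :
    IsUnit (toFrac (X i - X j : MvPolynomial σ R)) :=
  IsLocalization.map_units _
    (⟨_, isRegular_iff_mem_nonZeroDivisors.mp (isRegular_X_sub_X hij)⟩ : nonZeroDivisors _)

variable (R) in
/-- The action of permutations on the variables, extended to the total ring of fractions of the
polynomial ring. -/
noncomputable def permFrac :
    Perm σ →* (FractionRing (MvPolynomial σ R) ≃+* FractionRing (MvPolynomial σ R)) :=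
  (IsFractionRing.ringEquivOfRingEquivHom (MvPolynomial σ R) _).comp
    { toFun := fun s => (renameEquiv R s).toRingEquiv
      map_one' := by ext p : 1; exact rename_id_apply p
      map_mul' := fun s t => by ext p : 1; exact (rename_rename t s p).symm }

theorem permFrac_toFrac (s : Perm σ) (p : MvPolynomial σ R) :
    permFrac R s (toFrac p) = toFrac (rename s p) :=
  IsFractionRing.ringEquivOfRingEquiv_algebraMap _ p

theorem permFrac_swap_mul_self [DecidableEq σ] (i j : σ) :
    permFrac R (swap i j) * permFrac R (swap i j) = 1 := by
  rw [← map_mul, swap_mul_self, map_one]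

/-- The fraction `P(x_i, x_j) / (x_i - x_j)`, with the junk value `0` for `i = j`. -/
noncomputable def diffWeight (P : MvPolynomial (Fin 2) R) (i j : σ) :
    FractionRing (MvPolynomial σ R) :=
  toFrac (aeval ![X i, X j] P) * Ring.inverse (toFrac (X i - X j))

theorem diffWeight_mul_sub (P : MvPolynomial (Fin 2) R) {i j : σ} (hij : i ≠ j) :
    diffWeight P i j * toFrac (X i - X j) = toFrac (aeval ![X i, X j] P) :=
  Ring.inverse_mul_cancel_right _ _ (isUnit_toFrac_X_sub_X hij)

theorem permFrac_diffWeight (s : Perm σ) (P : MvPolynomial (Fin 2) R) {i j : σ} (hij : i ≠ j) :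
    permFrac R s (diffWeight P i j) = diffWeight P (s i) (s j) := by
  have hs : s i ≠ s j := s.injective.ne hij
  apply (isUnit_toFrac_X_sub_X hs).mul_left_injective
  have image := congrArg (permFrac R s) (diffWeight_mul_sub P hij)
  rw [map_mul, permFrac_toFrac, permFrac_toFrac, map_aeval_pair, map_sub, rename_X, rename_X]
    at image
  exact image.trans (diffWeight_mul_sub P hs).symm

/-- The operator `τ` is `P(x_i, x_j) (s - 1) / (x_i - x_j)` with `s` the transposition of `x_i`
and `x_j`, that is, `P(x_i, x_j)` times the divided difference operator in `x_i` and `x_j`. The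
denominator is cleared, as in `IsDividedDiff`. -/
def IsWeightedDividedDiff [DecidableEq σ] (P : MvPolynomial (Fin 2) R) (i j : σ)
    (τ : MvPolynomial σ R → MvPolynomial σ R) : Prop :=
  ∀ g, τ g * (X i - X j) = aeval ![X i, X j] P * (rename (swap i j) g - g)

theorem IsWeightedDividedDiff.toFrac_apply [DecidableEq σ] {P : MvPolynomial (Fin 2) R}
    {i j : σ} {τ : MvPolynomial σ R → MvPolynomial σ R} (hτ : IsWeightedDividedDiff P i j τ)
    (hij : i ≠ j) (g : MvPolynomial σ R) :
    toFrac (τ g) = skewDiff (diffWeight P i j) (permFrac R (swap i j)) (toFrac g) := by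
  apply (isUnit_toFrac_X_sub_X hij).mul_left_injective
  calc toFrac (τ g) * toFrac (X i - X j)
      = toFrac (aeval ![X i, X j] P) * toFrac (rename (swap i j) g - g) := by
        rw [← map_mul, hτ g, map_mul]
    _ = diffWeight P i j * toFrac (X i - X j) * (permFrac R (swap i j) (toFrac g) - toFrac g) := by
        rw [diffWeight_mul_sub P hij, permFrac_toFrac, map_sub]
    _ = skewDiff (diffWeight P i j) (permFrac R (swap i j)) (toFrac g) * toFrac (X i - X j) :=
        mul_right_comm _ _ _

/-- The polynomial `P₁` is the coefficient `P'` of `τ_t` in the braid relation for `P`, with the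
denominators cleared; `u, v, w` are the variables `0, 1, 2`. -/
def IsLeftBraidCoeff (P : MvPolynomial (Fin 2) R) (P₁ : MvPolynomial (Fin 3) R) : Prop :=
  P₁ * ((X 0 - X 1) * (X 0 - X 2) * (X 1 - X 2)) =
    rename ![1, 0] P * rename ![0, 2] P * (X 1 - X 2)
      + rename ![0, 2] P * rename ![1, 2] P * (X 0 - X 1)
      - rename ![0, 1] P * rename ![1, 2] P * (X 0 - X 2)

/-- The polynomial `P₂` is the coefficient `P''` of `τ_{t+1}` in the braid relation for `P`, with
the denominators cleared; `u, v, w` are the variables `0, 1, 2`. -/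
def IsRightBraidCoeff (P : MvPolynomial (Fin 2) R) (P₂ : MvPolynomial (Fin 3) R) : Prop :=
  P₂ * ((X 0 - X 1) * (X 0 - X 2) * (X 1 - X 2)) =
    -(rename ![0, 1] P * rename ![0, 2] P * (X 1 - X 2))
      - rename ![0, 2] P * rename ![2, 1] P * (X 0 - X 1)
      + rename ![0, 1] P * rename ![1, 2] P * (X 0 - X 2)

section BraidCoefficients

variable {P : MvPolynomial (Fin 2) R} {i j k : σ}

theorem isUnit_toFrac_vandermonde (hij : i ≠ j) (hik : i ≠ k) (hjk : j ≠ k) :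
    IsUnit (toFrac ((X i - X j) * (X i - X k) * (X j - X k) : MvPolynomial σ R)) := by
  simpa only [map_mul] using ((isUnit_toFrac_X_sub_X hij).mul (isUnit_toFrac_X_sub_X hik)).mul
    (isUnit_toFrac_X_sub_X hjk)

theorem IsLeftBraidCoeff.toFrac_aeval {P₁ : MvPolynomial (Fin 3) R} (hP₁ : IsLeftBraidCoeff P P₁)
    (hij : i ≠ j) (hik : i ≠ k) (hjk : j ≠ k) :
    toFrac (aeval ![X i, X j, X k] P₁) =
      diffWeight P i k * diffWeight P j k - diffWeight P j i * diffWeight P i k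
        - diffWeight P i j * diffWeight P j k := by
  apply (isUnit_toFrac_vandermonde hij hik hjk).mul_left_injective
  have cleared := congrArg
    (fun p => toFrac (aeval (![X i, X j, X k] : Fin 3 → MvPolynomial σ R) p)) hP₁
  simp only [map_mul, map_add, map_sub, aeval_rename_pair, aeval_X, Matrix.cons_val,
    ← diffWeight_mul_sub P hij, ← diffWeight_mul_sub P hik, ← diffWeight_mul_sub P hjk,
    ← diffWeight_mul_sub P hij.symm] at cleared ⊢
  rw [cleared]
  ring

theorem IsRightBraidCoeff.toFrac_aeval {P₂ : MvPolynomial (Fin 3) R}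
    (hP₂ : IsRightBraidCoeff P P₂) (hij : i ≠ j) (hik : i ≠ k) (hjk : j ≠ k) :
    toFrac (aeval ![X i, X j, X k] P₂) =
      diffWeight P i j * diffWeight P j k + diffWeight P i k * diffWeight P k j
        - diffWeight P i j * diffWeight P i k := by
  apply (isUnit_toFrac_vandermonde hij hik hjk).mul_left_injective
  have cleared := congrArg
    (fun p => toFrac (aeval (![X i, X j, X k] : Fin 3 → MvPolynomial σ R) p)) hP₂
  simp only [map_mul, map_add, map_sub, map_neg, aeval_rename_pair, aeval_X, Matrix.cons_val,
    ← diffWeight_mul_sub P hij, ← diffWeight_mul_sub P hik, ← diffWeight_mul_sub P hjk,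
    ← diffWeight_mul_sub P hjk.symm] at cleared ⊢
  rw [cleared]
  ring

end BraidCoefficients

end TotalFractions

section Positions

variable {m : ℕ} (t : Fin (m - 1))

theorem castL_ne_castR : castL t ≠ castR t := by
  simp [castL, castR]

theorem castL_ne_castR_succ (h : t.1 + 1 < m - 1) : castL t ≠ castR ⟨t.1 + 1, h⟩ := by
  simp only [castL, castR, ne_eq, Fin.mk.injEq]
  omega

theorem castR_ne_castR_succ (h : t.1 + 1 < m - 1) : castR t ≠ castR ⟨t.1 + 1, h⟩ := by
  simp [castR]

end Positions

theorem isWeightedDividedDiff_tauOp {F : Type} [Field F] {m : ℕ}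
    {dd : Fin (m - 1) → MvPolynomial (Fin m) F → MvPolynomial (Fin m) F}
    (hdd : IsDividedDiff dd) (P : MvPolynomial (Fin 2) F) (t : Fin (m - 1)) :
    IsWeightedDividedDiff P (castL t) (castR t) (tauOp P dd t) := fun g => by
  rw [tauOp, mul_assoc, hdd, Pat, swapAt]

end DD

open DD Equiv in
theorem stmt_17_general {R σ : Type*} [CommRing R] [DecidableEq σ] {i j k : σ}
    (hij : i ≠ j) (hik : i ≠ k) (hjk : j ≠ k) {P : MvPolynomial (Fin 2) R}
    {τ₁ τ₂ : MvPolynomial σ R → MvPolynomial σ R}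
    (hτ₁ : IsWeightedDividedDiff P i j τ₁) (hτ₂ : IsWeightedDividedDiff P j k τ₂)
    {P₁ P₂ : MvPolynomial (Fin 3) R} (hP₁ : IsLeftBraidCoeff P P₁) (hP₂ : IsRightBraidCoeff P P₂)
    (f : MvPolynomial σ R) :
    τ₂ (τ₁ (τ₂ f)) - τ₁ (τ₂ (τ₁ f)) =
      aeval ![X i, X j, X k] P₁ * τ₁ f + aeval ![X i, X j, X k] P₂ * τ₂ f := by
  apply IsFractionRing.injective (MvPolynomial σ R) (FractionRing (MvPolynomial σ R))
  have hbraid := congrArg (permFrac R) (swap_braid hij hik hjk)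
  have hA : permFrac R (swap j k) (diffWeight P i j) = diffWeight P i k := by
    rw [permFrac_diffWeight _ _ hij, swap_apply_of_ne_of_ne hij hik, swap_apply_left]
  have hB : permFrac R (swap i j) (diffWeight P j k) = diffWeight P i k := by
    rw [permFrac_diffWeight _ _ hjk, swap_apply_right, swap_apply_of_ne_of_ne hik.symm hjk.symm]
  have hA' : permFrac R (swap i j) (diffWeight P i j) = diffWeight P j i := by
    rw [permFrac_diffWeight _ _ hij, swap_apply_left, swap_apply_right]
  have hB' : permFrac R (swap j k) (diffWeight P j k) = diffWeight P k j := by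
    rw [permFrac_diffWeight _ _ hjk, swap_apply_left, swap_apply_right]
  simp only [map_mul] at hbraid
  simp only [map_sub, map_add, map_mul, hτ₁.toFrac_apply hij, hτ₂.toFrac_apply hjk,
    hP₁.toFrac_aeval hij hik hjk, hP₂.toFrac_aeval hij hik hjk]
  rw [skewDiff_braid (permFrac_swap_mul_self i j) (permFrac_swap_mul_self j k) hbraid hA hB,
    hA', hB']

open DD in
/-- the braid relation.  For every `P ∈ F[u,v]` and `1 ≤ t ≤ m−2` (with
`t' = t+1`), `τ_{t'}(τ_t(τ_{t'} f)) − τ_t(τ_{t'}(τ_t f))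
  = P'(x_t,x_{t+1},x_{t+2})·τ_t(f) + P''(x_t,x_{t+1},x_{t+2})·τ_{t'}(f)`,
where `P', P'' ∈ F[u,v,w]` are the polynomials determined (uniquely, as `F[u,v,w]` is an
integral domain) by the identities
`P' ·(u−v)(u−w)(v−w) = P(v,u)P(u,w)(v−w) + P(u,w)P(v,w)(u−v) − P(u,v)P(v,w)(u−w)` and
`P''·(u−v)(u−w)(v−w) = −P(u,v)P(u,w)(v−w) − P(u,w)P(w,v)(u−v) + P(u,v)P(v,w)(u−w)`
(their numerators are divisible by `(u−v)(u−w)(v−w)`). -/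
theorem stmt_17 (F : Type) [Field F] (m : ℕ) (P : MvPolynomial (Fin 2) F)
    (dd : (t : Fin (m - 1)) → MvPolynomial (Fin m) F → MvPolynomial (Fin m) F)
    (hdd : IsDividedDiff dd)
    (P₁ P₂ : MvPolynomial (Fin 3) F)
    (hP₁ : P₁ * ((X 0 - X 1) * (X 0 - X 2) * (X 1 - X 2)) =
        rename (![1, 0] : Fin 2 → Fin 3) P * rename (![0, 2] : Fin 2 → Fin 3) P * (X 1 - X 2)
        + rename (![0, 2] : Fin 2 → Fin 3) P * rename (![1, 2] : Fin 2 → Fin 3) P * (X 0 - X 1)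
        - rename (![0, 1] : Fin 2 → Fin 3) P * rename (![1, 2] : Fin 2 → Fin 3) P * (X 0 - X 2))
    (hP₂ : P₂ * ((X 0 - X 1) * (X 0 - X 2) * (X 1 - X 2)) =
        - (rename (![0, 1] : Fin 2 → Fin 3) P * rename (![0, 2] : Fin 2 → Fin 3) P * (X 1 - X 2))
        - rename (![0, 2] : Fin 2 → Fin 3) P * rename (![2, 1] : Fin 2 → Fin 3) P * (X 0 - X 1)
        + rename (![0, 1] : Fin 2 → Fin 3) P * rename (![1, 2] : Fin 2 → Fin 3) P * (X 0 - X 2))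
    (t : Fin (m - 1)) (h : t.1 + 1 < m - 1) (f : MvPolynomial (Fin m) F) :
    tauOp P dd ⟨t.1 + 1, h⟩ (tauOp P dd t (tauOp P dd ⟨t.1 + 1, h⟩ f))
      - tauOp P dd t (tauOp P dd ⟨t.1 + 1, h⟩ (tauOp P dd t f)) =
    aeval ![X (castL t), X (castR t), X (castR (⟨t.1 + 1, h⟩ : Fin (m - 1)))] P₁ * tauOp P dd t f
      + aeval ![X (castL t), X (castR t), X (castR (⟨t.1 + 1, h⟩ : Fin (m - 1)))] P₂ *
          tauOp P dd ⟨t.1 + 1, h⟩ f := by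
  exact stmt_17_general (castL_ne_castR t) (castL_ne_castR_succ t h) (castR_ne_castR_succ t h)
    (isWeightedDividedDiff_tauOp hdd P t) (isWeightedDividedDiff_tauOp hdd P ⟨t.1 + 1, h⟩) hP₁ hP₂ f
end

section
/- For each w ∈ S_m fix a reduced expression w = r_{j_1}⋯r_{j_k} and set ∂_w = ∂_{j_1} ∘ ⋯ ∘ ∂_{j_k} (with ∂_e = id for the identity element). Then the family of F-linear endomorphisms {∂_w ∘ μ_{x^𝐭} : w ∈ S_m, 𝐭 ∈ ℤ_{≥0}^m} of F[x_1,…,x_m] is linearly independent over F, where μ_{x^𝐭} denotes multiplication by the monomial x_1^{t_1}⋯x_m^{t_m}. -/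
/-!
Common setup: Let `F` be a field and `m` a positive integer.  The symmetric group `S_m` acts on
`F[x_1,…,x_m] = MvPolynomial (Fin m) F` by permuting the variables; `r_t` is the action of the
transposition `(t, t+1)`, and the divided difference operator `∂_t` is characterized by
`∂_t f * (x_t − x_{t+1}) = r_t f − f` (this determines `∂_t` uniquely, since `MvPolynomial` over a
field is an integral domain and `x_t − x_{t+1} ≠ 0`).  Positions are indexed by `t : Fin (m-1)`,
with `castL t`, `castR t : Fin m` the `t`-th and `(t+1)`-st positions.
-/

open MvPolynomial

namespace DD

/-- The permutation of `Fin m` determined by a word in the adjacent transpositions. -/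
def wordPerm {m : ℕ} (l : List (Fin (m - 1))) : Equiv.Perm (Fin m) := (l.map swapAt).prod

/-- `l` is a reduced expression for `w`: it represents `w` and has minimal length among all
words representing `w`. -/
def IsReducedWord {m : ℕ} (l : List (Fin (m - 1))) (w : Equiv.Perm (Fin m)) : Prop :=
  wordPerm l = w ∧ ∀ l' : List (Fin (m - 1)), wordPerm l' = w → l.length ≤ l'.length

/-- `∂_{j_1} ∘ ⋯ ∘ ∂_{j_k}` for a word `[j_1, …, j_k]` (with `∂` of the empty word the
identity). -/
def ddWord {F : Type} [Field F] {m : ℕ}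
    (dd : (t : Fin (m - 1)) → MvPolynomial (Fin m) F → MvPolynomial (Fin m) F) :
    List (Fin (m - 1)) → MvPolynomial (Fin m) F → MvPolynomial (Fin m) F
  | [], f => f
  | t :: l, f => dd t (ddWord dd l f)

end DD

/-!
Over the fraction field of `F[x_1,…,x_m]`, each `∂_w` becomes a combination `∑ v, c_{w,v} v` of
permutation operators.  Multiplying out the composite shows that `c_{w,v}` vanishes unless `v` is
represented by a subword of the reduced word of `w`, and that `c_{w,w} ≠ 0`: the expansion is
triangular for the length.  By Dedekind's theorem the permutation operators are linearly
independent, so in a relation `∑ w, ∂_w ∘ μ_{p_w} = 0` a `w` of maximal length with `p_w ≠ 0` gives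
`c_{w,w} · w(p_w) = 0`, which is absurd.  Hence all `p_w` vanish, and it remains to expand the `p_w`
in monomials.
-/

section LinearAlgebra

theorem eq_zero_of_sum_triangular_mul_eq_zero {ι R K α : Type*} [Fintype ι] [MonoidWithZero R]
    [CommRing K] [IsDomain K] [Preorder α] {χ : ι → R →*₀ K}
    (χ_injective : Function.Injective χ) (χ_eq_zero : ∀ i x, χ i x = 0 → x = 0)
    {ℓ : ι → α} {c : ι → ι → K} (c_diag : ∀ i, c i i ≠ 0)
    (c_triangular : ∀ i j, c i j ≠ 0 → j ≠ i → ℓ j < ℓ i)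
    {p : ι → R} (h : ∀ f, ∑ i, ∑ j, c i j * χ j (p i * f) = 0) : p = 0 := by
  classical
  have dedekind : LinearIndependent K fun j => (χ j : R → K) :=
    (linearIndependent_monoidHom R K).comp (fun j => (χ j : R →* K))
      fun i j hij => χ_injective (MonoidWithZeroHom.toMonoidHom_injective hij)
  have column_eq_zero : ∀ j, ∑ i, c i j * χ j (p i) = 0 := by
    refine Fintype.linearIndependent_iff.1 dedekind _ (funext fun f => ?_)
    simp only [Finset.sum_apply, Pi.smul_apply, smul_eq_mul, Finset.sum_mul, Pi.zero_apply]
    rw [Finset.sum_comm, ← h f]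
    simp only [map_mul, mul_assoc]
  by_contra hp
  obtain ⟨k, hk⟩ := Function.ne_iff.1 hp
  obtain ⟨i, hi, i_maximal⟩ :=
    Finset.exists_maximalFor ℓ (Finset.univ.filter fun i => p i ≠ 0) ⟨k, by simpa using hk⟩
  have hpi : p i ≠ 0 := (Finset.mem_filter.1 hi).2
  have offDiag_eq_zero : ∀ k, k ≠ i → c k i * χ i (p k) = 0 := by
    intro k hki
    by_contra hne
    have i_lt_k : ℓ i < ℓ k := c_triangular k i (left_ne_zero_of_mul hne) hki.symm
    have hpk : p k ≠ 0 := fun h0 => hne (by rw [h0, map_zero, mul_zero])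
    exact i_lt_k.not_ge (i_maximal (by simpa using hpk) i_lt_k.le)
  have diag_eq_zero : c i i * χ i (p i) = 0 := by
    rw [← column_eq_zero i, Fintype.sum_eq_single i offDiag_eq_zero]
  exact hpi (χ_eq_zero i _ ((mul_eq_zero.1 diag_eq_zero).resolve_left (c_diag i)))

theorem linearIndependent_comp_mul_basis {ι κ F A M : Type*} [Fintype ι] [CommRing F]
    [Ring A] [Algebra F A] [AddCommGroup M] [Module F M] (b : Module.Basis κ F A)
    {T : ι → A →ₗ[F] M}
    (hT : ∀ p : ι → A, (∀ f, ∑ i, T i (p i * f) = 0) → p = 0) :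
    LinearIndependent F fun q : ι × κ => fun f => T q.1 (b q.2 * f) := by
  classical
  let Φ : (ι → A) →ₗ[F] A → M :=
    LinearMap.pi fun f => ∑ i, T i ∘ₗ LinearMap.mulRight F f ∘ₗ LinearMap.proj i
  have Φ_apply (p : ι → A) (f : A) : Φ p f = ∑ i, T i (p i * f) := by simp [Φ]
  have ker_Φ : LinearMap.ker Φ = ⊥ :=
    LinearMap.ker_eq_bot'.2 fun p hp => hT p fun f => by rw [← Φ_apply, hp, Pi.zero_apply]
  have Φ_single (i : ι) (a : A) : Φ (Pi.single i a) = fun f => T i (a * f) := by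
    funext f
    rw [Φ_apply, Fintype.sum_eq_single i fun j hj => by simp [hj], Pi.single_eq_same]
  simpa only [Function.comp_def, Pi.basis_apply, Φ_single, Equiv.sigmaEquivProd_symm_apply] using
    ((Pi.basis fun _ : ι => b).linearIndependent.map' Φ ker_Φ).comp
      (Equiv.sigmaEquivProd ι κ).symm (Equiv.injective _)

end LinearAlgebra

section FractionField

variable {σ R : Type*} [CommRing R]

/-- The action of a permutation of the variables on polynomials, with values in the field of
rational functions. -/
noncomputable def renameToFrac (e : Equiv.Perm σ) :
    MvPolynomial σ R →+* FractionRing (MvPolynomial σ R) :=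
  (algebraMap _ _).comp (rename e : MvPolynomial σ R →ₐ[R] MvPolynomial σ R).toRingHom

theorem renameToFrac_apply (e : Equiv.Perm σ) (f : MvPolynomial σ R) :
    renameToFrac e f = algebraMap _ (FractionRing (MvPolynomial σ R)) (rename e f) :=
  rfl

theorem renameToFrac_injective (e : Equiv.Perm σ) :
    Function.Injective (renameToFrac e : MvPolynomial σ R →+* _) :=
  (FaithfulSMul.algebraMap_injective _ _).comp (rename_injective e e.injective)

theorem renameToFrac_perm_injective [Nontrivial R] :
    Function.Injective (renameToFrac : Equiv.Perm σ → MvPolynomial σ R →+* _) := by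
  intro v w hvw
  ext i
  have hX : rename v (X i : MvPolynomial σ R) = rename w (X i) :=
    FaithfulSMul.algebraMap_injective _ _ (DFunLike.congr_fun hvw (X i))
  rw [rename_X, rename_X] at hX
  exact X_injective hX

/-- The action of a permutation of the variables on the field of rational functions. -/
noncomputable def fracRename [IsDomain R] (e : Equiv.Perm σ) :
    FractionRing (MvPolynomial σ R) →+* FractionRing (MvPolynomial σ R) :=
  IsFractionRing.lift (renameToFrac_injective e)

theorem fracRename_algebraMap [IsDomain R] (e : Equiv.Perm σ) (f : MvPolynomial σ R) :
    fracRename e (algebraMap _ _ f) = renameToFrac e f :=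
  IsFractionRing.lift_algebraMap _ f

theorem fracRename_renameToFrac [IsDomain R] (e v : Equiv.Perm σ) (f : MvPolynomial σ R) :
    fracRename e (renameToFrac v f) = renameToFrac (e * v) f := by
  rw [renameToFrac_apply v, fracRename_algebraMap, renameToFrac_apply, renameToFrac_apply,
    rename_rename, Equiv.Perm.coe_mul]

end FractionField

namespace DD

variable {F : Type} [Field F] {m : ℕ}
  {dd : (t : Fin (m - 1)) → MvPolynomial (Fin m) F → MvPolynomial (Fin m) F}

section Words

theorem wordPerm_cons (t : Fin (m - 1)) (l : List (Fin (m - 1))) :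
    wordPerm (t :: l) = swapAt t * wordPerm l := by
  simp only [wordPerm, List.map_cons, List.prod_cons]

theorem swapAt_mul_swapAt_mul (t : Fin (m - 1)) (v : Equiv.Perm (Fin m)) :
    swapAt t * (swapAt t * v) = v :=
  Equiv.swap_mul_self_mul _ _ v

theorem IsReducedWord.of_cons {t : Fin (m - 1)} {l : List (Fin (m - 1))} {w : Equiv.Perm (Fin m)}
    (h : IsReducedWord (t :: l) w) : IsReducedWord l (wordPerm l) := by
  refine ⟨rfl, fun l' hl' => ?_⟩
  have cons_le : (t :: l).length ≤ (t :: l').length :=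
    h.2 (t :: l') (by rw [wordPerm_cons, hl', ← wordPerm_cons, h.1])
  simpa only [List.length_cons, Nat.add_le_add_iff_right] using cons_le

end Words

section Linearity

theorem X_castL_sub_X_castR_ne_zero (t : Fin (m - 1)) :
    (X (castL t) - X (castR t) : MvPolynomial (Fin m) F) ≠ 0 := by
  have castL_ne_castR : castL t ≠ castR t := by simp [castL, castR]
  exact sub_ne_zero.2 (X_injective.ne castL_ne_castR)

theorem IsDividedDiff.isLinearMap (hdd : IsDividedDiff dd) (t : Fin (m - 1)) :
    IsLinearMap F (dd t) where
  map_add f g := by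
    refine mul_right_cancel₀ (X_castL_sub_X_castR_ne_zero t) ?_
    rw [add_mul, hdd, hdd, hdd, map_add]
    ring
  map_smul a f := by
    refine mul_right_cancel₀ (X_castL_sub_X_castR_ne_zero t) ?_
    rw [smul_mul_assoc, hdd, hdd, map_smul, smul_sub]

theorem IsDividedDiff.isLinearMap_ddWord (hdd : IsDividedDiff dd) (l : List (Fin (m - 1))) :
    IsLinearMap F (ddWord dd l) := by
  induction l with
  | nil => exact LinearMap.id.isLinear
  | cons t l ih => exact ((hdd.isLinearMap t).mk' _ ∘ₗ ih.mk' _).isLinear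

end Linearity

section Expansion

variable (F) in
/-- The coefficient of `v` when `∂_{j_1} ∘ ⋯ ∘ ∂_{j_k}` is written as a combination of permutations
over the field of rational functions.  The recursion multiplies the expansion on the left by
`∂_t = (x_t - x_{t+1})⁻¹ (r_t - 1)`. -/
noncomputable def ddCoeff :
    List (Fin (m - 1)) → Equiv.Perm (Fin m) → FractionRing (MvPolynomial (Fin m) F)
  | [] => Pi.single 1 1
  | t :: l => fun v => (fracRename (swapAt t) (ddCoeff l (swapAt t * v)) - ddCoeff l v) /
      algebraMap _ _ (X (castL t) - X (castR t) : MvPolynomial (Fin m) F)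

theorem ddCoeff_cons (t : Fin (m - 1)) (l : List (Fin (m - 1))) (v : Equiv.Perm (Fin m)) :
    ddCoeff F (t :: l) v =
      (fracRename (swapAt t) (ddCoeff F l (swapAt t * v)) - ddCoeff F l v) /
        algebraMap _ _ (X (castL t) - X (castR t) : MvPolynomial (Fin m) F) :=
  rfl

theorem algebraMap_X_castL_sub_X_castR_ne_zero (t : Fin (m - 1)) :
    algebraMap (MvPolynomial (Fin m) F) (FractionRing (MvPolynomial (Fin m) F))
      (X (castL t) - X (castR t)) ≠ 0 :=
  (FaithfulSMul.algebraMap_eq_zero_iff _ _).not.2 (X_castL_sub_X_castR_ne_zero t)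

theorem IsDividedDiff.algebraMap_apply (hdd : IsDividedDiff dd) (t : Fin (m - 1))
    (f : MvPolynomial (Fin m) F) :
    algebraMap _ (FractionRing (MvPolynomial (Fin m) F)) (dd t f) =
      (renameToFrac (swapAt t) f - algebraMap _ _ f) /
        algebraMap _ _ (X (castL t) - X (castR t) : MvPolynomial (Fin m) F) := by
  rw [eq_div_iff (algebraMap_X_castL_sub_X_castR_ne_zero t), ← map_mul, hdd, map_sub,
    renameToFrac_apply]

theorem IsDividedDiff.algebraMap_ddWord (hdd : IsDividedDiff dd) (l : List (Fin (m - 1)))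
    (f : MvPolynomial (Fin m) F) :
    algebraMap _ (FractionRing (MvPolynomial (Fin m) F)) (ddWord dd l f) =
      ∑ v, ddCoeff F l v * renameToFrac v f := by
  induction l with
  | nil =>
    rw [Fintype.sum_eq_single 1 fun v hv => by simp [ddCoeff, hv]]
    simp [ddCoeff, ddWord, renameToFrac_apply]
  | cons t l ih =>
    have swapAt_ddWord : renameToFrac (swapAt t) (ddWord dd l f) =
        ∑ v, fracRename (swapAt t) (ddCoeff F l (swapAt t * v)) * renameToFrac v f := by
      rw [← fracRename_algebraMap, ih, map_sum, ← Equiv.sum_comp (Equiv.mulLeft (swapAt t))]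
      simp only [map_mul, fracRename_renameToFrac, Equiv.coe_mulLeft, swapAt_mul_swapAt_mul]
    rw [ddWord, hdd.algebraMap_apply, swapAt_ddWord, ih, ← Finset.sum_sub_distrib, Finset.sum_div]
    simp only [ddCoeff_cons, ← sub_mul, mul_div_right_comm]

theorem exists_sublist_of_ddCoeff_ne_zero {l : List (Fin (m - 1))} {v : Equiv.Perm (Fin m)}
    (hv : ddCoeff F l v ≠ 0) : ∃ l', l'.Sublist l ∧ wordPerm l' = v := by
  induction l generalizing v with
  | nil =>
    have hv1 : v = 1 := by
      by_contra hne
      exact hv (Pi.single_eq_of_ne hne _)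
    exact ⟨[], List.Sublist.slnil, hv1.symm⟩
  | cons t l ih =>
    by_cases hlv : ddCoeff F l v = 0
    · have htv : ddCoeff F l (swapAt t * v) ≠ 0 := fun h0 =>
        hv (by rw [ddCoeff_cons, h0, hlv, map_zero, sub_zero, zero_div])
      obtain ⟨l', hl', hw⟩ := ih htv
      exact ⟨t :: l', hl'.cons_cons t, by rw [wordPerm_cons, hw, swapAt_mul_swapAt_mul]⟩
    · obtain ⟨l', hl', hw⟩ := ih hlv
      exact ⟨l', hl'.cons t, hw⟩

theorem exists_length_lt_of_ddCoeff_ne_zero {l : List (Fin (m - 1))} {v : Equiv.Perm (Fin m)}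
    (hv : ddCoeff F l v ≠ 0) (hne : v ≠ wordPerm l) :
    ∃ l', wordPerm l' = v ∧ l'.length < l.length := by
  obtain ⟨l', hl', rfl⟩ := exists_sublist_of_ddCoeff_ne_zero hv
  exact ⟨l', rfl, hl'.length_le.lt_of_ne fun hlen => hne (by rw [hl'.eq_of_length hlen])⟩

theorem IsReducedWord.ddCoeff_ne_zero {l : List (Fin (m - 1))} {w : Equiv.Perm (Fin m)}
    (hl : IsReducedWord l w) : ddCoeff F l w ≠ 0 := by
  induction l generalizing w with
  | nil =>
    obtain rfl : 1 = w := hl.1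
    rw [ddCoeff, Pi.single_eq_same]
    exact one_ne_zero
  | cons t l ih =>
    have ddCoeff_tail_eq_zero : ddCoeff F l w = 0 := by
      by_contra hne
      obtain ⟨l', hl', hw⟩ := exists_sublist_of_ddCoeff_ne_zero hne
      exact (hl.2 l' hw).not_gt (Nat.lt_succ_of_le hl'.length_le)
    have swapAt_mul_eq : swapAt t * w = wordPerm l := by
      rw [← hl.1, wordPerm_cons, swapAt_mul_swapAt_mul]
    rw [ddCoeff_cons, ddCoeff_tail_eq_zero, sub_zero, swapAt_mul_eq]
    exact div_ne_zero ((map_ne_zero _).2 (ih hl.of_cons))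
      (algebraMap_X_castL_sub_X_castR_ne_zero t)

end Expansion

theorem IsDividedDiff.eq_zero_of_sum_ddWord_mul_eq_zero (hdd : IsDividedDiff dd)
    {red : Equiv.Perm (Fin m) → List (Fin (m - 1))}
    (hred : ∀ w, IsReducedWord (red w) w) {p : Equiv.Perm (Fin m) → MvPolynomial (Fin m) F}
    (h : ∀ f, ∑ w, ddWord dd (red w) (p w * f) = 0) : p = 0 := by
  let χ : Equiv.Perm (Fin m) →
      MvPolynomial (Fin m) F →*₀ FractionRing (MvPolynomial (Fin m) F) :=
    fun v => (renameToFrac v).toMonoidWithZeroHom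
  have χ_injective : Function.Injective χ := fun v w hvw =>
    renameToFrac_perm_injective (RingHom.ext fun f => DFunLike.congr_fun hvw f)
  have χ_eq_zero : ∀ v f, χ v f = 0 → f = 0 := fun v _ =>
    (map_eq_zero_iff (renameToFrac v) (renameToFrac_injective v)).1
  have ddCoeff_triangular : ∀ w v, ddCoeff F (red w) v ≠ 0 → v ≠ w →
      (red v).length < (red w).length := by
    intro w v hv hne
    obtain ⟨l', hl', hlen⟩ := exists_length_lt_of_ddCoeff_ne_zero hv (by rwa [(hred w).1])
    exact ((hred v).2 l' hl').trans_lt hlen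
  refine eq_zero_of_sum_triangular_mul_eq_zero χ_injective χ_eq_zero
    (fun w => (hred w).ddCoeff_ne_zero) ddCoeff_triangular fun f => ?_
  calc ∑ w, ∑ v, ddCoeff F (red w) v * χ v (p w * f)
      = algebraMap _ _ (∑ w, ddWord dd (red w) (p w * f)) := by
        rw [map_sum]
        exact Finset.sum_congr rfl fun w _ => (hdd.algebraMap_ddWord (red w) (p w * f)).symm
    _ = 0 := by rw [h, map_zero]

end DD

open DD in
/-- For each `w ∈ S_m` fix a reduced expression and let `∂_w` be the corresponding
composite of divided difference operators.  Then the family of `F`-linear endomorphisms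
`{∂_w ∘ μ_{x^𝐭} : w ∈ S_m, 𝐭 ∈ ℤ_{≥0}^m}` of `F[x_1,…,x_m]` is linearly independent over `F`,
where `μ_{x^𝐭}` is multiplication by the monomial `x_1^{t_1}⋯x_m^{t_m}`. -/
theorem stmt_18 (F : Type) [Field F] (m : ℕ)
    (dd : (t : Fin (m - 1)) → MvPolynomial (Fin m) F → MvPolynomial (Fin m) F)
    (hdd : IsDividedDiff dd)
    (red : Equiv.Perm (Fin m) → List (Fin (m - 1)))
    (hred : ∀ w, IsReducedWord (red w) w) :
    LinearIndependent F
      (fun p : Equiv.Perm (Fin m) × (Fin m → ℕ) =>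
        (fun f => ddWord dd (red p.1)
            (monomial (Finsupp.equivFunOnFinite.symm p.2) (1 : F) * f) :
          MvPolynomial (Fin m) F → MvPolynomial (Fin m) F)) := by
  have hT : ∀ p : Equiv.Perm (Fin m) → MvPolynomial (Fin m) F,
      (∀ f, ∑ w, (hdd.isLinearMap_ddWord (red w)).mk' _ (p w * f) = 0) → p = 0 :=
    fun _ => hdd.eq_zero_of_sum_ddWord_mul_eq_zero hred
  simpa using linearIndependent_comp_mul_basis
    ((basisMonomials (Fin m) F).reindex Finsupp.equivFunOnFinite) hT
end
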